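/- arXiv:2006.07850 — 2 statements merged into one kernel-verified Lean document; each statement's English description precedes it below -/
import Mathlib

section
/- Let X be a reflexive Banach space over 𝕜 (𝕜 = ℝ or ℂ), and let T be a power-bounded operator on X which is weakly mixing, with ergodic projection E (a bounded operator such that (1/n) ∑_{k=1}^n T^k x → E x in norm for every x ∈ X). If T = α·I + S for some scalar α ∈ 𝕜 with S^k compact for some k ≥ 1, then T is stable: ‖Tⁿ x − E x‖ → 0 for every x ∈ X; moreover T* is stable: ‖T*ⁿ x* − E* x*‖ → 0 for every x* ∈ X*. -/
open Filter Finset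

/-- The Banach-space adjoint of `T`, acting on the dual space: `T* f = f ∘ T`. -/
noncomputable def banachAdjoint {𝕜 : Type*} [RCLike 𝕜] {X : Type*} [NormedAddCommGroup X]
    [NormedSpace 𝕜 X] (T : X →L[𝕜] X) :
    StrongDual 𝕜 X →L[𝕜] StrongDual 𝕜 X :=
  (ContinuousLinearMap.compL 𝕜 X X 𝕜).flip T

/-! The vectors whose orbit under `T` tends to zero form a closed `T`-invariant subspace `M`. If
`y` has weakly mixing orbit and `K` is compact and commutes with `T`, then the orbit of `K y` is
relatively compact; were it bounded away from `0`, finitely many functionals would detect this,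
contradicting weak mixing. So `K y ∈ M`, in particular for `K = S ^ k = (T - α) ^ k`. The factors
`T - α` are then removed one at a time: if `(T - α) y ∈ M`, then `T ^ n y ≡ α ^ n y` modulo `M`.
For `‖α‖ < 1` the orbit of `y` approaches `M`, which forces `y ∈ M` by power-boundedness. For
`‖α‖ ≥ 1` and `y ∉ M`, a functional `f` vanishing on `M` with `f y = 1` has `|f (T ^ n y)| ≥ 1`,
contradicting weak mixing. Applied to `y = x - E x`, this is the stability of `T`.

By reflexivity `T*` is weakly mixing as well, and the factors `T* - α` can be removed as before. To
start, `T ^ n (1 - E) → 0` strongly, hence uniformly on compact sets, so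
`‖T ^ n (1 - E) S ^ k‖ → 0`; taking adjoints, `(S*) ^ k (f - E* f)` has null orbit under `T*`. -/

section PowerBounded

variable {𝕜 V : Type*} [NontriviallyNormedField 𝕜] [SeminormedAddCommGroup V] [NormedSpace 𝕜 V]
  {T : V →L[𝕜] V}

/-- A power-bounded operator: the powers of `T` are bounded in operator norm. -/
def IsPowerBounded (T : V →L[𝕜] V) : Prop :=
  ∃ C : ℝ, ∀ n : ℕ, ‖T ^ n‖ ≤ C

theorem IsPowerBounded.exists_pos_bound (hT : IsPowerBounded T) :
    ∃ C > 0, ∀ (n : ℕ) (x : V), ‖(T ^ n) x‖ ≤ C * ‖x‖ := by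
  obtain ⟨C, hC⟩ := hT
  exact ⟨max C 1, by positivity, fun n =>
    (T ^ n).le_of_opNorm_le ((hC n).trans (le_max_left C 1))⟩

theorem IsPowerBounded.isBounded_range_pow_apply (hT : IsPowerBounded T) (x : V) :
    Bornology.IsBounded (Set.range fun n : ℕ => (T ^ n) x) := by
  obtain ⟨C, -, hC⟩ := hT.exists_pos_bound
  exact isBounded_iff_forall_norm_le.2 ⟨C * ‖x‖, Set.forall_mem_range.2 fun n => hC n x⟩

theorem pow_apply_apply_of_commute {A : V →L[𝕜] V} (h : Commute A T) (n : ℕ) (x : V) :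
    (T ^ n) (A x) = A ((T ^ n) x) :=
  DFunLike.congr_fun (h.pow_right n).eq.symm x

/-- The stable subspace of `T`: the vectors whose orbit under `T` tends to zero. -/
def stableSubspace (T : V →L[𝕜] V) : Submodule 𝕜 V where
  carrier := {x | Tendsto (fun n : ℕ => (T ^ n) x) atTop (nhds 0)}
  add_mem' hx hy := by simpa only [Set.mem_ofPred_eq, map_add, add_zero] using hx.add hy
  zero_mem' := by simp only [Set.mem_ofPred_eq, map_zero, tendsto_const_nhds]
  smul_mem' c x hx := by simpa only [Set.mem_ofPred_eq, map_smul, smul_zero] using hx.const_smul c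

theorem mem_stableSubspace {x : V} :
    x ∈ stableSubspace T ↔ Tendsto (fun n : ℕ => (T ^ n) x) atTop (nhds 0) :=
  Iff.rfl

theorem apply_mem_stableSubspace {x : V} (hx : x ∈ stableSubspace T) :
    T x ∈ stableSubspace T := by
  rw [mem_stableSubspace, ← tendsto_add_atTop_iff_nat 1] at hx
  simpa only [mem_stableSubspace, pow_succ, mul_apply_eq_comp] using hx

theorem pow_apply_sub_pow_smul_mem_stableSubspace {α : 𝕜} {x : V}
    (hx : (T - α • 1) x ∈ stableSubspace T) (n : ℕ) :
    (T ^ n) x - α ^ n • x ∈ stableSubspace T := by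
  induction n with
  | zero => simp
  | succ n ih =>
    have hsplit : (T ^ (n + 1)) x - α ^ (n + 1) • x =
        T ((T ^ n) x - α ^ n • x) + α ^ n • (T - α • 1) x := by
      simp [pow_succ', smul_sub, smul_smul, mul_comm]
    rw [hsplit]
    exact add_mem (apply_mem_stableSubspace ih) (Submodule.smul_mem _ _ hx)

theorem sub_apply_mem_stableSubspace_iff {E : V →L[𝕜] V} (hTE : T * E = E) (x : V) :
    x - E x ∈ stableSubspace T ↔ Tendsto (fun n : ℕ => ‖(T ^ n) x - E x‖) atTop (nhds 0) := by
  have hpow : ∀ n : ℕ, (T ^ n) (E x) = E x := fun n => by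
    have hfix : E * 1 ^ n = T ^ n * E :=
      SemiconjBy.pow_right (show SemiconjBy E 1 T by rw [SemiconjBy, hTE, mul_one]) n
    rw [← mul_apply_eq_comp, ← hfix, one_pow, mul_one]
  rw [mem_stableSubspace, tendsto_zero_iff_norm_tendsto_zero]
  simp only [map_sub, hpow]

theorem IsPowerBounded.mem_stableSubspace_of_forall_exists_norm_sub_lt (hT : IsPowerBounded T)
    {x : V} (hx : ∀ ε > 0, ∃ n : ℕ, ∃ m ∈ stableSubspace T, ‖(T ^ n) x - m‖ < ε) :
    x ∈ stableSubspace T := by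
  obtain ⟨C, hC, hTC⟩ := hT.exists_pos_bound
  refine mem_stableSubspace.2 (Metric.tendsto_nhds.2 fun ε hε => ?_)
  obtain ⟨n, m, hm, hnm⟩ := hx (ε / (2 * C)) (by positivity)
  have hsmall : ∀ᶠ j in atTop, ‖(T ^ j) m‖ < ε / 2 :=
    (mem_stableSubspace.1 hm).norm.eventually_lt_const (by simpa using half_pos hε)
  filter_upwards [(tendsto_sub_atTop_nat n).eventually hsmall, eventually_ge_atTop n]
    with i hi hni
  have hpow : (T ^ i) x = (T ^ (i - n)) ((T ^ n) x - m) + (T ^ (i - n)) m := by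
    rw [← map_add, sub_add_cancel, ← mul_apply_eq_comp, ← pow_add,
      Nat.sub_add_cancel hni]
  calc dist ((T ^ i) x) 0 ≤ ‖(T ^ (i - n)) ((T ^ n) x - m)‖ + ‖(T ^ (i - n)) m‖ := by
        rw [dist_zero_right, hpow]; exact norm_add_le _ _
    _ < C * (ε / (2 * C)) + ε / 2 :=
        add_lt_add_of_le_of_lt ((hTC _ _).trans (by gcongr)) hi
    _ = ε := by field_simp; norm_num

theorem IsPowerBounded.isClosed_stableSubspace (hT : IsPowerBounded T) :
    IsClosed (stableSubspace T : Set V) := by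
  refine isClosed_of_closure_subset fun x hx =>
    hT.mem_stableSubspace_of_forall_exists_norm_sub_lt fun ε hε => ?_
  obtain ⟨m, hm, hxm⟩ := Metric.mem_closure_iff.1 hx ε hε
  exact ⟨0, m, hm, by simpa [dist_eq_norm] using hxm⟩

theorem tendsto_norm_comp_zero_of_isCompactOperator {ι U W : Type*} {l : Filter ι}
    [NormedAlgebra ℝ 𝕜] [SeminormedAddCommGroup U] [NormedSpace 𝕜 U]
    [SeminormedAddCommGroup W] [NormedSpace 𝕜 W]
    {A : ι → V →L[𝕜] W} (hbdd : ∃ C : ℝ, ∀ i, ‖A i‖ ≤ C)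
    (hA : ∀ x, Tendsto (A · x) l (nhds 0)) {K : U →L[𝕜] V} (hK : IsCompactOperator K) :
    Tendsto (fun i => ‖(A i).comp K‖) l (nhds 0) := by
  obtain ⟨Q, hQ, hKQ⟩ := hK.image_closedBall_subset_compact (f := (K : U →ₗ[𝕜] V)) 1
  have heqc : Equicontinuous fun i => ⇑(A i) :=
    ((NormedSpace.equicontinuous_TFAE A).out 5 1).1 hbdd
  have hunif : TendstoUniformlyOn (fun i => ⇑(A i)) 0 l Q :=
    UniformOnFun.tendsto_iff_tendstoUniformlyOn.1
      ((EquicontinuousOn.tendsto_uniformOnFun_iff_pi' (𝔖 := {Q}) (by simpa using hQ)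
        (fun _ _ => heqc.equicontinuousOn _) l 0).2
        (tendsto_pi_nhds.2 fun q => hA q)) Q rfl
  refine Metric.tendsto_nhds.2 fun ε hε => ?_
  filter_upwards [Metric.tendstoUniformlyOn_iff.1 hunif (ε / 2) (half_pos hε)] with i hi
  have hle : ‖(A i).comp K‖ ≤ ε / 2 :=
    ContinuousLinearMap.opNorm_le_of_unit_norm (half_pos hε).le fun x hx => by
      have hKx : K x ∈ Q := hKQ ⟨x, by simp [hx], rfl⟩
      simpa using (hi (K x) hKx).le
  simpa using hle.trans_lt (half_lt_self hε)

end PowerBounded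

section ErgodicProjection

/-- `E` is the ergodic projection of `T`: the limit of the Cesàro averages of the powers of `T` in
the strong operator topology. -/
def IsErgodicProjection {𝕜 V : Type*} [NontriviallyNormedField 𝕜] [SeminormedAddCommGroup V]
    [NormedSpace 𝕜 V] (T E : V →L[𝕜] V) : Prop :=
  ∀ x : V, Tendsto (fun n : ℕ => (n : 𝕜)⁻¹ • ∑ k ∈ Icc 1 n, (T ^ k) x) atTop (nhds (E x))

variable {𝕜 V : Type*} [RCLike 𝕜] [NormedAddCommGroup V] [NormedSpace 𝕜 V] {T E : V →L[𝕜] V}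

theorem IsErgodicProjection.commute (hE : IsErgodicProjection T E) : Commute E T := by
  ext x
  refine tendsto_nhds_unique (hE (T x)) (((T.continuous.tendsto _).comp (hE x)).congr fun n => ?_)
  simp [pow_apply_apply_of_commute (Commute.refl T)]

theorem IsErgodicProjection.commute_one_sub (hE : IsErgodicProjection T E) : Commute (1 - E) T :=
  (Commute.one_left T).sub_left hE.commute

theorem birkhoffAverage_eq_smul_sum_Icc (T : V →L[𝕜] V) (n : ℕ) (x : V) :
    birkhoffAverage 𝕜 T T n x = (n : 𝕜)⁻¹ • ∑ k ∈ Icc 1 n, (T ^ k) x := by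
  rw [birkhoffAverage, birkhoffSum, range_eq_Ico, ← Ico_add_one_right_eq_Icc, ← zero_add 1,
    ← sum_Ico_add']
  simp [Function.iterate_succ_apply']

theorem IsErgodicProjection.mul_eq (hE : IsErgodicProjection T E) (hT : IsPowerBounded T) :
    E * T = E := by
  ext x
  have hbdd : Bornology.IsBounded (Set.range fun n => T (T^[n] x)) := by
    refine (hT.isBounded_range_pow_apply x).subset (Set.range_subset_iff.2 fun n => ⟨n + 1, ?_⟩)
    simp [Function.iterate_succ_apply']
  have hlim := tendsto_birkhoffAverage_apply_sub_birkhoffAverage 𝕜 hbdd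
  simp only [birkhoffAverage_eq_smul_sum_Icc] at hlim
  exact sub_eq_zero.1 (tendsto_nhds_unique ((hE (T x)).sub (hE x)) hlim)

end ErgodicProjection

section WeaklyMixing

variable {𝕜 V : Type*} [RCLike 𝕜] [NormedAddCommGroup V] [NormedSpace 𝕜 V] {T : V →L[𝕜] V}

/-- The vectors `y` whose orbit under `T` tends weakly to zero in absolute Cesàro mean. With this
notion, `T` is weakly mixing with ergodic projection `E` when every `x - E x` is such a vector. -/
def IsWeaklyMixingVector (T : V →L[𝕜] V) (y : V) : Prop :=
  ∀ f : StrongDual 𝕜 V,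
    Tendsto (fun n : ℕ => (∑ k ∈ Icc 1 n, ‖f ((T ^ k) y)‖) / n) atTop (nhds 0)

theorem IsWeaklyMixingVector.apply_of_commute {A : V →L[𝕜] V} {y : V}
    (hy : IsWeaklyMixingVector T y) (h : Commute A T) : IsWeaklyMixingVector T (A y) := fun f => by
  simpa only [pow_apply_apply_of_commute h, ContinuousLinearMap.comp_apply] using hy (f.comp A)

theorem exists_lt_of_tendsto_cesaro_zero {u : ℕ → ℝ}
    (hu : Tendsto (fun n : ℕ => (∑ k ∈ Icc 1 n, u k) / n) atTop (nhds 0)) {δ : ℝ} (hδ : 0 < δ) :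
    ∃ n, u n < δ := by
  by_contra! hle
  refine hδ.not_ge (ge_of_tendsto hu ?_)
  filter_upwards [eventually_gt_atTop 0] with n hn
  rw [le_div_iff₀ (by exact_mod_cast hn)]
  calc δ * n = ∑ _k ∈ Icc 1 n, δ := by simp [mul_comm]
    _ ≤ ∑ k ∈ Icc 1 n, u k := sum_le_sum fun k _ => hle k

theorem IsWeaklyMixingVector.exists_sum_norm_lt {y : V} (hy : IsWeaklyMixingVector T y)
    (t : Finset (StrongDual 𝕜 V)) {δ : ℝ} (hδ : 0 < δ) :
    ∃ n : ℕ, ∑ f ∈ t, ‖f ((T ^ n) y)‖ < δ := by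
  refine exists_lt_of_tendsto_cesaro_zero ?_ hδ
  have hsum := tendsto_finsetSum t fun f _ => hy f
  simp only [sum_const_zero] at hsum
  refine hsum.congr fun n => ?_
  rw [← sum_div, sum_comm]

theorem exists_finset_dual_one_lt_sum_norm_of_isCompact {Q : Set V} (hQ : IsCompact Q)
    (h0 : 0 ∉ Q) : ∃ t : Finset (StrongDual 𝕜 V), ∀ q ∈ Q, 1 < ∑ f ∈ t, ‖f q‖ := by
  obtain ⟨t, ht⟩ := hQ.elim_finite_subcover (fun f : StrongDual 𝕜 V => {q | 1 < ‖f q‖})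
    (fun f => isOpen_lt continuous_const (by fun_prop)) fun q hq => by
      obtain ⟨f, hf⟩ := SeparatingDual.exists_eq_one (R := 𝕜) (ne_of_mem_of_not_mem hq h0)
      exact Set.mem_iUnion.2 ⟨(2 : 𝕜) • f, by simp [hf]⟩
  refine ⟨t, fun q hq => ?_⟩
  obtain ⟨f, hft, hfq⟩ := Set.mem_iUnion₂.1 (ht hq)
  exact lt_of_lt_of_le hfq (single_le_sum (f := fun f => ‖f q‖) (fun _ _ => norm_nonneg _) hft)

theorem IsWeaklyMixingVector.apply_mem_stableSubspace_of_isCompactOperator {y : V}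
    (hy : IsWeaklyMixingVector T y) (hT : IsPowerBounded T) {K : V →L[𝕜] V} (h : Commute K T)
    (hK : IsCompactOperator K) : K y ∈ stableSubspace T := by
  refine hT.mem_stableSubspace_of_forall_exists_norm_sub_lt fun ε hε => ?_
  suffices hsmall : ∃ n : ℕ, ‖(T ^ n) (K y)‖ < ε by
    obtain ⟨n, hn⟩ := hsmall
    exact ⟨n, 0, zero_mem _, by rwa [sub_zero]⟩
  by_contra! hlarge
  obtain ⟨Q, hQ, hKQ⟩ := hK.image_subset_compact_of_bounded (f := (K : V →ₗ[𝕜] V))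
    (hT.isBounded_range_pow_apply y)
  have hQε : IsCompact (Q ∩ {q | ε ≤ ‖q‖}) :=
    hQ.inter_right (isClosed_le continuous_const continuous_norm)
  obtain ⟨t, ht⟩ := exists_finset_dual_one_lt_sum_norm_of_isCompact (𝕜 := 𝕜) hQε (by simp [hε])
  obtain ⟨n, hn⟩ := (hy.apply_of_commute h).exists_sum_norm_lt t one_pos
  have hmem : (T ^ n) (K y) ∈ Q := by
    rw [pow_apply_apply_of_commute h]
    exact hKQ ⟨_, ⟨n, rfl⟩, rfl⟩
  exact (ht _ ⟨hmem, hlarge n⟩).not_gt hn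

theorem exists_dual_eq_zero_on_and_eq_one {M : Submodule 𝕜 V} (hM : IsClosed (M : Set V)) {y : V}
    (hy : y ∉ M) : ∃ f : StrongDual 𝕜 V, (∀ m ∈ M, f m = 0) ∧ f y = 1 := by
  have : IsClosed (M : Set V) := hM
  obtain ⟨g, hg⟩ := SeparatingDual.exists_eq_one (R := 𝕜) (x := M.mkQ y) (by simpa using hy)
  refine ⟨g.comp M.mkQL, fun m hm => ?_, hg⟩
  have : M.mkQ m = 0 := by simpa using hm
  simp [this]

theorem IsWeaklyMixingVector.mem_stableSubspace_of_sub_smul_one_apply_mem {y : V} {α : 𝕜}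
    (hy : IsWeaklyMixingVector T y) (hT : IsPowerBounded T)
    (h : (T - α • 1) y ∈ stableSubspace T) : y ∈ stableSubspace T := by
  have horbit := pow_apply_sub_pow_smul_mem_stableSubspace h
  rcases lt_or_ge ‖α‖ 1 with hα | hα
  · refine hT.mem_stableSubspace_of_forall_exists_norm_sub_lt fun ε hε => ?_
    have hgeom : Tendsto (fun n => ‖α ^ n • y‖) atTop (nhds 0) := by
      simpa using ((tendsto_pow_atTop_nhds_zero_of_norm_lt_one hα).smul_const y).norm
    obtain ⟨n, hn⟩ := (hgeom.eventually_lt_const hε).exists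
    exact ⟨n, _, horbit n, by rwa [sub_sub_cancel]⟩
  · by_contra hnot
    obtain ⟨f, hf, hfy⟩ := exists_dual_eq_zero_on_and_eq_one hT.isClosed_stableSubspace hnot
    have hfpow : ∀ n : ℕ, f ((T ^ n) y) = α ^ n := fun n => by
      simpa only [map_sub, map_smul, hfy, smul_eq_mul, mul_one, sub_eq_zero] using hf _ (horbit n)
    obtain ⟨n, hn⟩ := exists_lt_of_tendsto_cesaro_zero (hy f) one_pos
    rw [hfpow, norm_pow] at hn
    exact (one_le_pow₀ hα).not_gt hn

theorem commute_sub_smul_one {R A : Type*} [CommSemiring R] [Ring A] [Algebra R A] (a : A) (r : R) :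
    Commute (a - r • 1) a :=
  (Commute.refl a).sub_left ((Commute.one_left a).smul_left r)

theorem IsWeaklyMixingVector.mem_stableSubspace_of_sub_smul_one_pow_apply_mem {y : V} {α : 𝕜}
    (hy : IsWeaklyMixingVector T y) (hT : IsPowerBounded T) {k : ℕ}
    (h : ((T - α • 1) ^ k) y ∈ stableSubspace T) : y ∈ stableSubspace T := by
  induction k generalizing y with
  | zero => simpa using h
  | succ k ih =>
    rw [pow_succ, mul_apply_eq_comp] at h
    exact hy.mem_stableSubspace_of_sub_smul_one_apply_mem hT
      (ih (hy.apply_of_commute (commute_sub_smul_one T α)) h)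

end WeaklyMixing

section Adjoint

variable {𝕜 V : Type*} [RCLike 𝕜] [NormedAddCommGroup V] [NormedSpace 𝕜 V] {T : V →L[𝕜] V}

theorem banachAdjoint_apply (A : V →L[𝕜] V) (f : StrongDual 𝕜 V) :
    banachAdjoint A f = f.comp A :=
  rfl

theorem banachAdjoint_mul (A B : V →L[𝕜] V) :
    banachAdjoint (A * B) = banachAdjoint B * banachAdjoint A :=
  rfl

theorem banachAdjoint_pow (A : V →L[𝕜] V) (n : ℕ) :
    banachAdjoint (A ^ n) = banachAdjoint A ^ n := by
  induction n with
  | zero => rfl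
  | succ n ih => rw [pow_succ', banachAdjoint_mul, ih, pow_succ]

theorem banachAdjoint_sub_smul_one (A : V →L[𝕜] V) (α : 𝕜) :
    banachAdjoint (A - α • 1) = banachAdjoint A - α • 1 := by
  ext f x
  simp [banachAdjoint_apply]

theorem banachAdjoint_one_sub_apply (A : V →L[𝕜] V) (f : StrongDual 𝕜 V) :
    banachAdjoint (1 - A) f = f - banachAdjoint A f := by
  ext x
  simp [banachAdjoint_apply]

theorem norm_banachAdjoint_le (A : V →L[𝕜] V) : ‖banachAdjoint A‖ ≤ ‖A‖ :=
  ContinuousLinearMap.opNorm_le_bound _ (norm_nonneg A) fun f => by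
    rw [banachAdjoint_apply, mul_comm]
    exact f.opNorm_comp_le A

theorem IsPowerBounded.banachAdjoint (hT : IsPowerBounded T) :
    IsPowerBounded (banachAdjoint T) := by
  obtain ⟨C, hC⟩ := hT
  refine ⟨C, fun n => ?_⟩
  rw [← banachAdjoint_pow]
  exact (norm_banachAdjoint_le _).trans (hC n)

theorem isWeaklyMixingVector_banachAdjoint_of_surjective_inclusionInDoubleDual
    (hrefl : Function.Surjective (NormedSpace.inclusionInDoubleDual 𝕜 V)) {P : V →L[𝕜] V}
    (hPT : Commute P T) (hP : ∀ x, IsWeaklyMixingVector T (P x)) (f : StrongDual 𝕜 V) :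
    IsWeaklyMixingVector (banachAdjoint T) (banachAdjoint P f) := fun F => by
  obtain ⟨x, rfl⟩ := hrefl F
  simpa only [← banachAdjoint_pow, NormedSpace.dual_def, banachAdjoint_apply,
    ContinuousLinearMap.comp_apply, pow_apply_apply_of_commute hPT] using hP x f

theorem IsErgodicProjection.isWeaklyMixingVector_banachAdjoint_sub {E : V →L[𝕜] V}
    (hE : IsErgodicProjection T E)
    (hrefl : Function.Surjective (NormedSpace.inclusionInDoubleDual 𝕜 V))
    (hwm : ∀ x, IsWeaklyMixingVector T (x - E x)) (f : StrongDual 𝕜 V) :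
    IsWeaklyMixingVector (banachAdjoint T) (f - banachAdjoint E f) := by
  rw [← banachAdjoint_one_sub_apply]
  exact isWeaklyMixingVector_banachAdjoint_of_surjective_inclusionInDoubleDual hrefl
    hE.commute_one_sub hwm f

theorem banachAdjoint_apply_banachAdjoint_mem_stableSubspace (hT : IsPowerBounded T)
    {P K : V →L[𝕜] V} (hPT : Commute P T) (hKT : Commute K T)
    (hP : ∀ x, P x ∈ stableSubspace T) (hK : IsCompactOperator K) (f : StrongDual 𝕜 V) :
    banachAdjoint K (banachAdjoint P f) ∈ stableSubspace (banachAdjoint T) := by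
  obtain ⟨C, hC⟩ := hT
  have hPbdd : ∀ n : ℕ, ‖T ^ n * P‖ ≤ C * ‖P‖ := fun n =>
    (norm_mul_le _ _).trans (by gcongr; exact hC n)
  have hunif : Tendsto (fun n : ℕ => ‖f‖ * ‖(T ^ n * P).comp K‖) atTop (nhds 0) := by
    simpa using (tendsto_norm_comp_zero_of_isCompactOperator ⟨_, hPbdd⟩ hP hK).const_mul ‖f‖
  refine squeeze_zero_norm (fun n => ?_) hunif
  have hcomm : P * K * T ^ n = (T ^ n * P).comp K := by
    rw [((hPT.mul_left hKT).pow_right n).eq, ← mul_assoc]; rfl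
  calc ‖(banachAdjoint T ^ n) (banachAdjoint K (banachAdjoint P f))‖
      = ‖banachAdjoint (P * K * T ^ n) f‖ := by
        simp only [banachAdjoint_mul, banachAdjoint_pow]; rfl
    _ ≤ ‖f‖ * ‖(T ^ n * P).comp K‖ := by rw [hcomm]; exact f.opNorm_comp_le _

end Adjoint

theorem stable_of_weakMixing_scalar_plus_compact_power_general {𝕜 : Type*} [RCLike 𝕜]
    {X : Type*} [NormedAddCommGroup X] [NormedSpace 𝕜 X] {T E S : X →L[𝕜] X}
    (hpb : IsPowerBounded T) (hE : IsErgodicProjection T E)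
    (hwm : ∀ x, IsWeaklyMixingVector T (x - E x)) {α : 𝕜} {k : ℕ}
    (hS : IsCompactOperator (S ^ k : X →L[𝕜] X)) (hT : T = α • (1 : X →L[𝕜] X) + S) :
    (∀ x : X, Tendsto (fun n : ℕ => ‖(T ^ n) x - E x‖) atTop (nhds 0)) ∧
    ((∀ f, IsWeaklyMixingVector (banachAdjoint T) (f - banachAdjoint E f)) →
      ∀ f : StrongDual 𝕜 X,
        Tendsto (fun n : ℕ => ‖(banachAdjoint T ^ n) f - banachAdjoint E f‖)
          atTop (nhds 0)) := by
  obtain rfl : S = T - α • 1 := eq_sub_of_add_eq' hT.symm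
  have hET : E * T = E := hE.mul_eq hpb
  have hTE : T * E = E := hE.commute.eq.symm.trans hET
  have hcomm : Commute ((T - α • 1) ^ k) T := (commute_sub_smul_one T α).pow_left k
  have hstable : ∀ x, x - E x ∈ stableSubspace T := fun x =>
    (hwm x).mem_stableSubspace_of_sub_smul_one_pow_apply_mem hpb
      ((hwm x).apply_mem_stableSubspace_of_isCompactOperator hpb hcomm hS)
  refine ⟨fun x => (sub_apply_mem_stableSubspace_iff hTE x).1 (hstable x), fun hwmAdj f => ?_⟩
  have hTEAdj : banachAdjoint T * banachAdjoint E = banachAdjoint E := by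
    rw [← banachAdjoint_mul, hET]
  refine (sub_apply_mem_stableSubspace_iff hTEAdj f).1
    ((hwmAdj f).mem_stableSubspace_of_sub_smul_one_pow_apply_mem (α := α) (k := k)
      hpb.banachAdjoint ?_)
  rw [← banachAdjoint_sub_smul_one, ← banachAdjoint_pow, ← banachAdjoint_one_sub_apply]
  exact banachAdjoint_apply_banachAdjoint_mem_stableSubspace hpb hE.commute_one_sub hcomm
    hstable hS f

/-- Let `X` be a reflexive Banach space over `𝕜` (`ℝ` or `ℂ`), and let `T`
be a weakly mixing power-bounded operator with ergodic projection `E`. If `T = α·I + S` with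
`S^k` compact for some `k ≥ 1`, then `T` and `T*` are stable. -/
theorem stable_of_weakMixing_scalar_plus_compact_power {𝕜 : Type*} [RCLike 𝕜]
    {X : Type*} [NormedAddCommGroup X] [NormedSpace 𝕜 X] [CompleteSpace X]
    (hrefl : Function.Bijective (NormedSpace.inclusionInDoubleDual 𝕜 X))
    (T : X →L[𝕜] X) (hpb : ∃ C : ℝ, ∀ n : ℕ, ‖T ^ n‖ ≤ C)
    (E : X →L[𝕜] X)
    (hE : ∀ x : X, Tendsto (fun n : ℕ => (n : 𝕜)⁻¹ • ∑ k ∈ Icc 1 n, (T ^ k) x)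
      atTop (nhds (E x)))
    (hwm : ∀ x : X, ∀ f : StrongDual 𝕜 X,
        Tendsto (fun n : ℕ => (∑ k ∈ Icc 1 n, ‖f ((T ^ k) (x - E x))‖) / n) atTop (nhds 0))
    (α : 𝕜) (S : X →L[𝕜] X) (k : ℕ) (hk : 1 ≤ k)
    (hS : IsCompactOperator (S ^ k : X →L[𝕜] X))
    (hT : T = α • (1 : X →L[𝕜] X) + S) :
    (∀ x : X, Tendsto (fun n : ℕ => ‖(T ^ n) x - E x‖) atTop (nhds 0)) ∧
    (∀ f : StrongDual 𝕜 X,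
        Tendsto (fun n : ℕ => ‖(banachAdjoint T ^ n) f - banachAdjoint E f‖)
          atTop (nhds 0)) := by
  have hstable := stable_of_weakMixing_scalar_plus_compact_power_general hpb hE hwm hS hT
  exact hstable.imp_right fun hadj =>
    hadj (IsErgodicProjection.isWeaklyMixingVector_banachAdjoint_sub hE hrefl.surjective hwm)
end

section
/- Let T be a weakly almost periodic operator on a complex Banach space X. If σ(T) ∩ 𝕋 is countable, where 𝕋 = {λ ∈ ℂ : |λ| = 1}, then T is almost periodic: for every x ∈ X the orbit {Tⁿ x : n ≥ 0} is relatively compact in the norm topology. -/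
open Filter

/-!
For a power-bounded `T`, the distance of the orbit sequence `(Tⁿ x)ₙ` to the totally bounded
sequences is a seminorm in `x` for which `T` is isometric; passing to the completion of the
quotient, `T` becomes an isometry `V`. Every operator commuting with `T` also descends, in
particular the resolvents of `T`, so `σ(V) ⊆ σ(T)` and `σ(V) ∩ 𝕋` is countable. If some orbit of
`T` is not relatively compact, the completion is nonzero. Since `𝕋 ⊄ σ(V)`, the isometry `V` is
then invertible with `σ(V) ⊆ 𝕋` countable and compact, hence with an isolated point `λ`, and the
growth of the resolvent of an isometry forces `λ` to be a simple pole. The residue there produces a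
nonzero functional `φ` on `X` with `φ ∘ T = λ φ` that vanishes at every vector with totally bounded
orbit.

On the other hand, `|φ|` is constant on the weak closure of each orbit. This closure contains a
minimal weakly compact invariant set. By Baire, a nonempty relatively weakly open piece of the
minimal set lies in a small norm ball; finitely many images of this piece cover the minimal set,
which is therefore totally bounded in norm. So `φ` vanishes somewhere on every orbit closure, hence
everywhere, a contradiction.
-/

open Set Metric
open scoped Topology ComplexConjugate BoundedContinuousFunction

/-! ### Isolated spectral points -/

-- For `‖w - c‖ = r` the quadratic equals `(w - c) * (‖w‖ ^ 2 - 1)`, obtained by eliminating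
-- `conj (w - c) = r ^ 2 / (w - c)`: a holomorphic function whose modulus on the circle measures the
-- distance to the unit circle.
theorem norm_quadratic_of_norm_sub_eq {c w : ℂ} {r : ℝ} (hw : ‖w - c‖ = r) :
    ‖conj c * (w - c) ^ 2 + (‖c‖ ^ 2 - 1 + r ^ 2 : ℝ) * (w - c) + c * r ^ 2‖ =
      r * |‖w‖ ^ 2 - 1| := by
  have hsq (v : ℂ) : ((‖v‖ ^ 2 : ℝ) : ℂ) = v * conj v := by
    rw [Complex.mul_conj, Complex.normSq_eq_norm_sq]
  have hfactor : conj c * (w - c) ^ 2 + (‖c‖ ^ 2 - 1 + r ^ 2 : ℝ) * (w - c) + c * r ^ 2 =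
      (w - c) * (‖w‖ ^ 2 - 1 : ℝ) := by
    have hr := hsq (w - c)
    rw [hw] at hr
    push_cast at hr hsq ⊢
    rw [hr, hsq, hsq, map_sub]
    ring
  rw [hfactor, norm_mul, hw, Complex.norm_real, Real.norm_eq_abs]

theorem norm_mul_norm_le_of_abs_norm_sub_one_mul_norm_le {E : Type*} [NormedAddCommGroup E]
    [NormedSpace ℂ E] {G : ℂ → E} {c : ℂ} {r M : ℝ} (hr : 0 < r)
    (hG : DiffContOnCl ℂ G (ball c r)) (hM : ∀ w ∈ sphere c r, |‖w‖ - 1| * ‖G w‖ ≤ M) :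
    ‖c‖ * r * ‖G c‖ ≤ M * (‖c‖ + r + 1) := by
  let q (w : ℂ) : ℂ := conj c * (w - c) ^ 2 + (‖c‖ ^ 2 - 1 + r ^ 2 : ℝ) * (w - c) + c * r ^ 2
  have hq : Differentiable ℂ q := by fun_prop
  have hsphere : ∀ w ∈ frontier (ball c r), ‖q w • G w‖ ≤ r * (M * (‖c‖ + r + 1)) := by
    intro w hw
    rw [frontier_ball c hr.ne'] at hw
    have hwc : ‖w - c‖ = r := mem_sphere_iff_norm.1 hw
    have hnorm : ‖w‖ ≤ ‖c‖ + r := by linarith [norm_sub_norm_le w c]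
    calc ‖q w • G w‖ = r * (|‖w‖ - 1| * ‖G w‖ * (‖w‖ + 1)) := by
          rw [norm_smul, norm_quadratic_of_norm_sub_eq hwc,
            show ‖w‖ ^ 2 - 1 = (‖w‖ - 1) * (‖w‖ + 1) by ring, abs_mul,
            abs_of_nonneg (by positivity : 0 ≤ ‖w‖ + 1)]
          ring
      _ ≤ r * (M * (‖c‖ + r + 1)) := by
          have hM0 : 0 ≤ M := le_trans (by positivity) (hM w hw)
          gcongr
          exact hM w hw
  have hmax := Complex.norm_le_of_forall_mem_frontier_norm_le isBounded_ball
    (hq.diffContOnCl.smul hG) hsphere (subset_closure (mem_ball_self hr))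
  have hqc : ‖q c • G c‖ = r * (‖c‖ * r * ‖G c‖) := by
    have : q c = c * r ^ 2 := by simp [q]
    rw [norm_smul, this, norm_mul, norm_pow, Complex.norm_real, Real.norm_of_nonneg hr.le]
    ring
  exact le_of_mul_le_mul_left (hqc ▸ hmax) hr

theorem exists_eventually_notMem_of_countable {α : Type*} [MetricSpace α] [CompleteSpace α]
    {C : Set α} (hclosed : IsClosed C) (hne : C.Nonempty) (hcount : C.Countable) :
    ∃ x ∈ C, ∀ᶠ y in 𝓝[≠] x, y ∉ C := by
  by_contra! h
  have hcard : Cardinal.mk (ℕ → Bool) = Cardinal.continuum := by simp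
  have hperfect : Perfect C := ⟨hclosed, fun x hx => accPt_iff_frequently_nhdsNE.2 (h x hx)⟩
  obtain ⟨f, hfC, -, hf⟩ := hperfect.exists_nat_bool_injection hne
  have : Countable (range f) := (hcount.mono hfC).to_subtype
  have : Countable (ℕ → Bool) := (rangeFactorization_injective.2 hf).countable
  exact Cardinal.aleph0_lt_continuum.not_ge (hcard ▸ Cardinal.mk_le_aleph0)

theorem not_countable_sphere {E : Type*} [NormedAddCommGroup E] [NormedSpace ℝ E]
    (hE : 1 < Module.rank ℝ E) {r : ℝ} (hr : 0 < r) : ¬ (sphere (0 : E) r).Countable := by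
  intro hcount
  have := (rank_pos_iff_nontrivial (R := ℝ)).1 (zero_lt_one.trans hE)
  obtain ⟨v, hv⟩ := (NormedSpace.sphere_nonempty (x := (0 : E))).2 hr.le
  let w : sphere (0 : E) r := ⟨v, hv⟩
  have hneg : (w : E) = -w := hcount.isTotallyDisconnected _ subset_rfl
    (isPreconnected_sphere hE 0 r) w.2 (-w).2
  exact ne_neg_of_mem_sphere ℝ hr.ne' w (Subtype.ext hneg)

theorem resolvent_mul_self {R A : Type*} [CommRing R] [Ring A] [Algebra R A] {a : A} {z : R}
    (hz : z ∈ resolventSet R a) : resolvent a z * a = z • resolvent a z - 1 := by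
  have h : resolvent a z * (algebraMap R A z - a) = 1 := Ring.inverse_mul_cancel _ hz
  rw [← h, mul_sub, Algebra.algebraMap_eq_smul_one, mul_smul_comm, mul_one, sub_sub_cancel]

section
variable {A : Type*} [NormedRing A] [NormedAlgebra ℂ A] [CompleteSpace A] {a : A} {l : ℂ}

theorem mem_resolventSet_of_norm_sub_smul_resolvent_lt_one {z w : ℂ} (hw : w ∈ resolventSet ℂ a)
    (hzw : ‖(w - z) • resolvent a w‖ < 1) : z ∈ resolventSet ℂ a := by
  have hfactor : algebraMap ℂ A z - a =
      (algebraMap ℂ A w - a) * (1 - (w - z) • resolvent a w) := by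
    have hinv : (algebraMap ℂ A w - a) * resolvent a w = 1 := Ring.mul_inverse_cancel _ hw
    rw [mul_sub, mul_smul_comm, hinv, mul_one, ← Algebra.algebraMap_eq_smul_one, map_sub]
    abel
  rw [spectrum.mem_resolventSet_iff, hfactor]
  exact hw.mul (isUnit_one_sub_of_norm_lt_one hzw)

theorem not_tendsto_smul_resolvent_zero (hl : l ∈ spectrum ℂ a)
    (hisol : ∀ᶠ z in 𝓝[≠] l, z ∉ spectrum ℂ a) :
    ¬ Tendsto (fun z => (z - l) • resolvent a z) (𝓝[≠] l) (𝓝 0) := by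
  intro hzero
  have hres : ∀ᶠ z in 𝓝[≠] l, z ∈ resolventSet ℂ a := hisol.mono fun z => not_not.1
  have hlittle : (fun z => resolvent a z - resolvent a l) =o[𝓝[≠] l] fun z => (z - l)⁻¹ := by
    have := (Asymptotics.isBigO_refl (fun z => (z - l)⁻¹) (𝓝[≠] l)).smul_isLittleO
      ((Asymptotics.isLittleO_one_iff ℂ).2 hzero)
    refine this.congr' ?_ (by simp)
    filter_upwards [self_mem_nhdsWithin] with z hz
    rw [spectrum.resolvent_zero_of_mem_spectrum hl, sub_zero, inv_smul_smul₀ (sub_ne_zero.2 hz)]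
  have hlim := Complex.tendsto_limUnder_of_differentiable_on_punctured_nhds_of_isLittleO
    (hres.mono fun z hz => (spectrum.hasDerivAt_resolvent_const_left hz).differentiableAt) hlittle
  have hsub : Tendsto (fun z : ℂ => algebraMap ℂ A z - a) (𝓝[≠] l) (𝓝 (algebraMap ℂ A l - a)) :=
    (((algebraMapCLM ℂ A).continuous.tendsto l).sub_const a).mono_left nhdsWithin_le_nhds
  refine hl (spectrum.mem_resolventSet_of_left_right_inverse
    (tendsto_nhds_unique (hsub.mul hlim) (tendsto_const_nhds.congr' (hres.mono fun z hz => ?_)))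
    (tendsto_nhds_unique (hlim.mul hsub) (tendsto_const_nhds.congr' (hres.mono fun z hz => ?_))))
  · exact (Ring.mul_inverse_cancel _ hz).symm
  · exact (Ring.inverse_mul_cancel _ hz).symm

theorem exists_mul_eq_smul_of_isBoundedUnder_resolvent (hl : l ∈ spectrum ℂ a)
    (hisol : ∀ᶠ z in 𝓝[≠] l, z ∉ spectrum ℂ a)
    (hbdd : IsBoundedUnder (· ≤ ·) (𝓝[≠] l) fun z => ‖(z - l) • resolvent a z‖) :
    ∃ p : A, p ≠ 0 ∧ p * a = l • p := by
  have hres : ∀ᶠ z in 𝓝[≠] l, z ∈ resolventSet ℂ a := hisol.mono fun z => not_not.1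
  obtain ⟨p, hp⟩ : ∃ p, Tendsto (fun z => (z - l) • resolvent a z) (𝓝[≠] l) (𝓝 p) :=
    ⟨_, Complex.tendsto_limUnder_of_differentiable_on_punctured_nhds_of_bounded_under
      (hres.mono fun z hz =>
        (differentiableAt_id.sub_const l).smul
          (spectrum.hasDerivAt_resolvent_const_left hz).differentiableAt)
      (by simpa using hbdd)⟩
  refine ⟨p, fun h => not_tendsto_smul_resolvent_zero hl hisol (h ▸ hp), ?_⟩
  have hid : Tendsto (fun z : ℂ => z) (𝓝[≠] l) (𝓝 l) := nhdsWithin_le_nhds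
  have hlim : Tendsto (fun z => z • ((z - l) • resolvent a z) - (z - l) • (1 : A)) (𝓝[≠] l)
      (𝓝 (l • p)) := by
    simpa using (hid.smul hp).sub ((hid.sub_const l).smul_const (1 : A))
  refine tendsto_nhds_unique (hp.mul_const a) (hlim.congr' (hres.mono fun z hz => ?_))
  dsimp only
  rw [smul_mul_assoc, resolvent_mul_self hz, smul_sub, smul_comm]
end

/-! ### Spectrum of a linear isometry -/

section
variable {Z : Type*} [NormedAddCommGroup Z] [NormedSpace ℂ Z] {V : Z →L[ℂ] Z}

theorem abs_norm_sub_one_mul_norm_le_of_isometry (hV : Isometry V) (l : ℂ) (z : Z) :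
    |‖l‖ - 1| * ‖z‖ ≤ ‖l • z - V z‖ := by
  calc |‖l‖ - 1| * ‖z‖ = |‖l • z‖ - ‖V z‖| := by
        rw [hV.norm_map_of_map_zero (map_zero V), norm_smul, ← sub_one_mul, abs_mul, abs_norm]
    _ ≤ ‖l • z - V z‖ := abs_norm_sub_norm_le _ _

theorem abs_norm_sub_one_mul_norm_resolvent_le_of_isometry (hV : Isometry V) (l : ℂ) :
    |‖l‖ - 1| * ‖resolvent V l‖ ≤ 1 := by
  by_cases hl : l ∈ spectrum ℂ V
  · simp [spectrum.resolvent_zero_of_mem_spectrum hl]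
  rw [← Real.norm_eq_abs, ← norm_smul]
  refine ContinuousLinearMap.opNorm_le_bound _ zero_le_one fun z => ?_
  have hinv : l • resolvent V l z - V (resolvent V l z) = z :=
    DFunLike.congr_fun (Ring.mul_inverse_cancel _ (not_not.1 hl)) z
  rw [smul_apply, norm_smul, one_mul, Real.norm_eq_abs]
  simpa only [hinv] using abs_norm_sub_one_mul_norm_le_of_isometry hV l (resolvent V l z)

variable [CompleteSpace Z]

theorem spectrum_subset_closedBall_of_isometry (hV : Isometry V) :
    spectrum ℂ V ⊆ closedBall 0 1 := by
  have hnorm : ‖V‖ ≤ 1 := V.opNorm_le_bound zero_le_one fun z => by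
    rw [hV.norm_map_of_map_zero (map_zero V), one_mul]
  refine (spectrum.subset_closedBall_norm_mul V).trans (closedBall_subset_closedBall ?_)
  exact mul_le_one₀ hnorm (norm_nonneg _) ContinuousLinearMap.norm_id_le

theorem ball_subset_resolventSet_of_isometry {l : ℂ} (hV : Isometry V) (hl : l ∈ resolventSet ℂ V)
    (hl1 : ‖l‖ = 1) : ball 0 1 ⊆ resolventSet ℂ V := by
  have hopen : IsOpen (resolventSet ℂ V) := spectrum.isOpen_resolventSet V
  refine (convex_ball (0 : ℂ) 1).isPreconnected.subset_of_closure_inter_subset hopen ?_ ?_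
  · have hcl : l ∈ closure (ball (0 : ℂ) 1) := by simp [closure_ball, hl1]
    rw [inter_comm]
    exact mem_closure_iff.1 hcl _ hopen hl
  · rintro z ⟨hz, hzball⟩
    have hz1 : ‖z‖ < 1 := mem_ball_zero_iff.1 hzball
    obtain ⟨w, hw, hzw⟩ := Metric.mem_closure_iff.1 hz ((1 - ‖z‖) / 3) (by linarith)
    rw [dist_comm, dist_eq_norm] at hzw
    have hw1 : 2 * ‖w - z‖ ≤ |‖w‖ - 1| := by
      linarith [neg_le_abs (‖w‖ - 1), norm_sub_norm_le w z]
    refine mem_resolventSet_of_norm_sub_smul_resolvent_lt_one hw ?_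
    rw [norm_smul]
    nlinarith [abs_norm_sub_one_mul_norm_resolvent_le_of_isometry hV w, norm_nonneg (resolvent V w)]

theorem spectrum_subset_unitCircle_of_isometry (hV : Isometry V)
    (hcount : (spectrum ℂ V ∩ {l | ‖l‖ = 1}).Countable) : spectrum ℂ V ⊆ {l | ‖l‖ = 1} := by
  obtain ⟨l, hl1, hl⟩ : ∃ l : ℂ, ‖l‖ = 1 ∧ l ∈ resolventSet ℂ V := by
    by_contra! h
    refine not_countable_sphere (E := ℂ) (by simp [Complex.rank_real_complex]) one_pos
      (hcount.mono fun l hl => ?_)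
    have hl1 : ‖l‖ = 1 := mem_sphere_zero_iff_norm.1 hl
    exact ⟨h l hl1, hl1⟩
  intro z hz
  refine le_antisymm (mem_closedBall_zero_iff.1 (spectrum_subset_closedBall_of_isometry hV hz))
    (not_lt.1 fun hz1 => ?_)
  exact hz (ball_subset_resolventSet_of_isometry hV hl hl1 (mem_ball_zero_iff.2 hz1))

theorem isBoundedUnder_norm_sub_smul_resolvent_of_isometry (hV : Isometry V) {l : ℂ} (hl : ‖l‖ = 1)
    (hisol : ∀ᶠ z in 𝓝[≠] l, z ∉ spectrum ℂ V) :
    IsBoundedUnder (· ≤ ·) (𝓝[≠] l) fun z => ‖(z - l) • resolvent V z‖ := by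
  obtain ⟨ε, hε, hball⟩ := Metric.eventually_nhds_iff_ball.1 (eventually_nhdsWithin_iff.1 hisol)
  -- Apply the maximum principle on the ball of radius `‖z - l‖ / 2 ≤ 1 / 4` around `z`, where
  -- `1 / 2 ≤ ‖z‖ ≤ 3 / 2`: the constant is `11 = (3 / 2 + 1 / 4 + 1) / (1 / 2 * (1 / 2))`.
  refine isBoundedUnder_of_eventually_le (a := 11) ?_
  filter_upwards [self_mem_nhdsWithin, nhdsWithin_le_nhds (ball_mem_nhds l (half_pos hε)),
    nhdsWithin_le_nhds (ball_mem_nhds l one_half_pos)] with z hne hzε hz2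
  rw [mem_ball_iff_norm] at hzε hz2
  have hpos : 0 < ‖z - l‖ := norm_pos_iff.2 (sub_ne_zero.2 hne)
  have hres : ∀ w ∈ closedBall z (‖z - l‖ / 2), w ∈ resolventSet ℂ V := by
    intro w hw
    rw [mem_closedBall_iff_norm] at hw
    refine not_not.1 (hball w ?_ ?_)
    · rw [mem_ball_iff_norm]
      linarith [norm_sub_le_norm_sub_add_norm_sub w z l]
    · rintro rfl
      rw [norm_sub_rev] at hw
      linarith
  have hdiff : DifferentiableOn ℂ (resolvent V) (closedBall z (‖z - l‖ / 2)) := fun w hw =>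
    (spectrum.hasDerivAt_resolvent_const_left (hres w hw)).differentiableAt.differentiableWithinAt
  have hmax := norm_mul_norm_le_of_abs_norm_sub_one_mul_norm_le (half_pos hpos)
    (hdiff.diffContOnCl_ball subset_rfl) fun w _ =>
      abs_norm_sub_one_mul_norm_resolvent_le_of_isometry hV w
  have hz : |‖z‖ - 1| < 1 / 2 := by
    simpa only [hl] using (abs_norm_sub_norm_le z l).trans_lt hz2
  have hhalf : 1 / 2 * (‖z - l‖ * ‖resolvent V z‖) ≤ ‖z‖ * (‖z - l‖ * ‖resolvent V z‖) := by
    gcongr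
    linarith [(abs_lt.1 hz).1]
  rw [norm_smul]
  linarith [(abs_lt.1 hz).2]

theorem exists_mul_eq_smul_of_isometry [Nontrivial Z] (hV : Isometry V)
    (hcount : (spectrum ℂ V ∩ {l | ‖l‖ = 1}).Countable) :
    ∃ l : ℂ, ‖l‖ = 1 ∧ ∃ P : Z →L[ℂ] Z, P ≠ 0 ∧ P * V = l • P := by
  have hsub := spectrum_subset_unitCircle_of_isometry hV hcount
  rw [inter_eq_left.2 hsub] at hcount
  obtain ⟨l, hl, hisol⟩ := exists_eventually_notMem_of_countable (spectrum.isClosed V)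
    (spectrum.nonempty V) hcount
  exact ⟨l, hsub hl, exists_mul_eq_smul_of_isBoundedUnder_resolvent hl hisol
    (isBoundedUnder_norm_sub_smul_resolvent_of_isometry hV (hsub hl) hisol)⟩
end

/-! ### Transfer along maps with dense range -/

section
variable {𝕜 X Z : Type*} [NontriviallyNormedField 𝕜] [NormedAddCommGroup X] [NormedSpace 𝕜 X]
  [NormedAddCommGroup Z] [NormedSpace 𝕜 Z] [CompleteSpace Z] {T : X →L[𝕜] X} {V : Z →L[𝕜] Z}
  {J : X →L[𝕜] Z}

theorem exists_forall_apply_eq_of_denseRange (hJ : DenseRange J) (A : X →L[𝕜] X)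
    (hA : ∃ C, ∀ x, ‖J (A x)‖ ≤ C * ‖J x‖) : ∃ B : Z →L[𝕜] Z, ∀ x, B (J x) = J (A x) :=
  ⟨(J ∘L A).toLinearMap.extendOfNorm J.toLinearMap, LinearMap.extendOfNorm_eq hJ hA⟩

theorem spectrum_subset_of_denseRange (hJ : DenseRange J) (hV : ∀ x, V (J x) = J (T x))
    (hcomm : ∀ S : X →L[𝕜] X, Commute S T → ∃ C, ∀ x, ‖J (S x)‖ ≤ C * ‖J x‖) :
    spectrum 𝕜 V ⊆ spectrum 𝕜 T := by
  intro z hzV hzT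
  obtain ⟨u, hu⟩ := hzT
  have hcommT : Commute (u : X →L[𝕜] X) T :=
    hu ▸ (Algebra.commute_algebraMap_left z T).sub_left (Commute.refl T)
  obtain ⟨R, hR⟩ := exists_forall_apply_eq_of_denseRange hJ _ (hcomm _ hcommT.units_inv_left)
  have hVz (x : X) : (algebraMap 𝕜 (Z →L[𝕜] Z) z - V) (J x) = J ((u : X →L[𝕜] X) x) := by
    simp [hu, Algebra.algebraMap_eq_smul_one, hV]
  refine hzV (spectrum.mem_resolventSet_of_left_right_inverse (b := R) (c := R) ?_ ?_)
  all_goals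
    refine ContinuousLinearMap.ext fun y => hJ.induction_on y
      (isClosed_eq (ContinuousLinearMap.continuous _) (ContinuousLinearMap.continuous _))
      fun x => ?_
  · rw [mul_apply_eq_comp, hR, hVz]
    exact congrArg J (DFunLike.congr_fun u.mul_inv x)
  · rw [mul_apply_eq_comp, hVz, hR]
    exact congrArg J (DFunLike.congr_fun u.inv_mul x)

theorem exists_isometry_of_denseRange (hJ : DenseRange J) (hT : ∀ x, ‖J (T x)‖ = ‖J x‖) :
    ∃ V : Z →L[𝕜] Z, (∀ x, V (J x) = J (T x)) ∧ Isometry V := by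
  obtain ⟨V, hV⟩ := exists_forall_apply_eq_of_denseRange hJ T ⟨1, fun x => by rw [hT, one_mul]⟩
  refine ⟨V, hV, AddMonoidHomClass.isometry_of_norm V fun z =>
    hJ.induction_on z ?_ fun x => by rw [hV, hT]⟩
  exact isClosed_eq V.continuous.norm continuous_norm
end

section
variable {X Z : Type*} [NormedAddCommGroup X] [NormedSpace ℂ X]
  [NormedAddCommGroup Z] [NormedSpace ℂ Z] [CompleteSpace Z] {T : X →L[ℂ] X} {J : X →L[ℂ] Z}

theorem exists_eigenfunctional_of_denseRange [Nontrivial Z] (hJ : DenseRange J)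
    (hT : ∀ x, ‖J (T x)‖ = ‖J x‖)
    (hcomm : ∀ S : X →L[ℂ] X, Commute S T → ∃ C, ∀ x, ‖J (S x)‖ ≤ C * ‖J x‖)
    (hcount : (spectrum ℂ T ∩ {l | ‖l‖ = 1}).Countable) :
    ∃ l : ℂ, ‖l‖ = 1 ∧ ∃ φ : Z →L[ℂ] ℂ, φ ∘L J ≠ 0 ∧ ∀ x, φ (J (T x)) = l * φ (J x) := by
  obtain ⟨V, hVJ, hV⟩ := exists_isometry_of_denseRange hJ hT
  have hsub : spectrum ℂ V ⊆ spectrum ℂ T := spectrum_subset_of_denseRange hJ hVJ hcomm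
  obtain ⟨l, hl, P, hP0, hPV⟩ :=
    exists_mul_eq_smul_of_isometry hV (hcount.mono (inter_subset_inter_left _ hsub))
  obtain ⟨z, hz⟩ : ∃ z, P z ≠ 0 := by
    contrapose! hP0
    exact ContinuousLinearMap.ext hP0
  obtain ⟨ψ, hψ⟩ := SeparatingDual.exists_ne_zero (R := ℂ) hz
  refine ⟨l, hl, ψ ∘L P, fun h => hψ ?_, fun x => ?_⟩
  · have hzero : ψ ∘L P = 0 := ContinuousLinearMap.ext fun y => hJ.induction_on y
      (isClosed_eq (ContinuousLinearMap.continuous _) (ContinuousLinearMap.continuous _))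
      (DFunLike.congr_fun h)
    exact DFunLike.congr_fun hzero z
  · have hPVx : P (V (J x)) = l • P (J x) := DFunLike.congr_fun hPV (J x)
    rw [← hVJ, ContinuousLinearMap.comp_apply, hPVx, map_smul, smul_eq_mul,
      ContinuousLinearMap.comp_apply]

theorem exists_eigenfunctional (hJ : J ≠ 0) (hT : ∀ x, ‖J (T x)‖ = ‖J x‖)
    (hcomm : ∀ S : X →L[ℂ] X, Commute S T → ∃ C, ∀ x, ‖J (S x)‖ ≤ C * ‖J x‖)
    (hcount : (spectrum ℂ T ∩ {l | ‖l‖ = 1}).Countable) :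
    ∃ l : ℂ, ‖l‖ = 1 ∧ ∃ φ : X →L[ℂ] ℂ, φ ≠ 0 ∧ (∀ x, φ (T x) = l * φ x) ∧
      ∀ x, J x = 0 → φ x = 0 := by
  have hmem (x : X) : J x ∈ J.range.topologicalClosure :=
    Submodule.le_topologicalClosure _ (LinearMap.mem_range_self _ x)
  have : CompleteSpace J.range.topologicalClosure :=
    (Submodule.isClosed_topologicalClosure _).completeSpace_coe
  let J' := J.codRestrict J.range.topologicalClosure hmem
  have hdense : DenseRange J' :=
    ((denseRange_inclusion_iff subset_closure).2 subset_rfl).comp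
      rangeFactorization_surjective.denseRange (continuous_inclusion subset_closure)
  obtain ⟨x₀, hx₀⟩ : ∃ x, J x ≠ 0 := by
    contrapose! hJ
    exact ContinuousLinearMap.ext hJ
  have : Nontrivial J.range.topologicalClosure :=
    ⟨J' x₀, 0, fun h => hx₀ (congrArg Subtype.val h)⟩
  obtain ⟨l, hl, φ, hφ0, hφ⟩ := exists_eigenfunctional_of_denseRange hdense hT hcomm hcount
  refine ⟨l, hl, φ ∘L J', hφ0, hφ, fun x hx => ?_⟩
  have hx' : J' x = 0 := Subtype.ext hx
  rw [ContinuousLinearMap.comp_apply, hx', map_zero]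
end

/-! ### Orbits modulo totally bounded sequences -/

theorem totallyBounded_image2_add {E : Type*} [SeminormedAddCommGroup E] {s t : Set E}
    (hs : TotallyBounded s) (ht : TotallyBounded t) : TotallyBounded (image2 (· + ·) s t) := by
  rw [Metric.totallyBounded_iff] at hs ht ⊢
  intro ε hε
  obtain ⟨s', hs', hss'⟩ := hs (ε / 2) (half_pos hε)
  obtain ⟨t', ht', htt'⟩ := ht (ε / 2) (half_pos hε)
  refine ⟨image2 (· + ·) s' t', hs'.image2 _ ht', ?_⟩
  rintro _ ⟨a, ha, b, hb, rfl⟩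
  obtain ⟨a', ha', haa'⟩ := mem_iUnion₂.1 (hss' ha)
  obtain ⟨b', hb', hbb'⟩ := mem_iUnion₂.1 (htt' hb)
  refine mem_iUnion₂.2 ⟨a' + b', mem_image2_of_mem ha' hb', ?_⟩
  rw [mem_ball] at haa' hbb' ⊢
  linarith [dist_add_add_le a b a' b']

theorem norm_mk_le_mul_norm_mk {𝕜 E : Type*} [Ring 𝕜] [SeminormedAddCommGroup E]
    [Module 𝕜 E] {S : Submodule 𝕜 E} {f g : E} {C : ℝ} (hC : 0 ≤ C)
    (h : ∀ a ∈ S, ∃ b ∈ S, ‖g - b‖ ≤ C * ‖f - a‖) :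
    ‖(Submodule.Quotient.mk g : E ⧸ S)‖ ≤ C * ‖(Submodule.Quotient.mk f : E ⧸ S)‖ := by
  have hinf (e : E) : ‖(Submodule.Quotient.mk e : E ⧸ S)‖ = infDist e S :=
    QuotientAddGroup.norm_mk (S := S.toAddSubgroup) e
  rw [hinf, hinf, infDist_eq_iInf (x := f), Real.mul_iInf_of_nonneg hC]
  refine le_ciInf fun a => ?_
  obtain ⟨b, hb, hab⟩ := h a a.2
  rw [← dist_eq_norm, ← dist_eq_norm] at hab
  exact (infDist_le_dist_of_mem hb).trans hab

section
variable (𝕜 X : Type*) [NontriviallyNormedField 𝕜] [NormedAddCommGroup X] [NormedSpace 𝕜 X]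

/-- The bounded sequences in `X` with totally bounded range. The orbits of an almost periodic
operator lie in this closed subspace, so the quotient by it detects failure of almost
periodicity. -/
def totallyBoundedSequences : Submodule 𝕜 (ℕ →ᵇ X) where
  carrier := {f | TotallyBounded (range f)}
  add_mem' {f g} hf hg := by
    refine (totallyBounded_image2_add hf hg).subset (range_subset_iff.2 fun n => ?_)
    exact mem_image2_of_mem (mem_range_self n) (mem_range_self n)
  zero_mem' := (totallyBounded_singleton 0).subset (range_subset_iff.2 fun _ => rfl)
  smul_mem' c f hf := by
    refine (hf.image (uniformContinuous_const_smul c)).subset (range_subset_iff.2 fun n => ?_)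
    exact mem_image_of_mem (c • ·) (mem_range_self n)

instance isClosed_totallyBoundedSequences :
    IsClosed (totallyBoundedSequences 𝕜 X : Set (ℕ →ᵇ X)) := by
  refine isClosed_of_closure_subset fun f hf => Metric.totallyBounded_iff.2 fun ε hε => ?_
  obtain ⟨g, hg, hfg⟩ := Metric.mem_closure_iff.1 hf (ε / 2) (half_pos hε)
  obtain ⟨t, ht, hgt⟩ := Metric.totallyBounded_iff.1 hg (ε / 2) (half_pos hε)
  refine ⟨t, ht, range_subset_iff.2 fun n => ?_⟩
  obtain ⟨y, hy, hgy⟩ := mem_iUnion₂.1 (hgt (mem_range_self n))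
  refine mem_iUnion₂.2 ⟨y, hy, ?_⟩
  rw [mem_ball] at hgy ⊢
  linarith [dist_triangle (f n) (g n) y, f.dist_coe_le_dist (g := g) n]
end

section
variable {𝕜 X : Type*} [NontriviallyNormedField 𝕜] [NormedAddCommGroup X] [NormedSpace 𝕜 X]

namespace totallyBoundedSequences

theorem norm_mkQ_le_of_forall_apply_succ {f g : ℕ →ᵇ X} (hfg : ∀ n, g n = f (n + 1)) :
    ‖(totallyBoundedSequences 𝕜 X).mkQ g‖ ≤ ‖(totallyBoundedSequences 𝕜 X).mkQ f‖ := by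
  rw [← one_mul ‖(totallyBoundedSequences 𝕜 X).mkQ f‖]
  refine norm_mk_le_mul_norm_mk zero_le_one fun a ha =>
    ⟨a.compContinuous ⟨Nat.succ, continuous_of_discreteTopology⟩,
      ha.subset (range_comp_subset_range Nat.succ a), ?_⟩
  rw [one_mul, BoundedContinuousFunction.norm_le (norm_nonneg _)]
  intro n
  exact (congrArg (‖· - a (n + 1)‖) (hfg n)).trans_le ((f - a).norm_coe_le_norm (n + 1))

theorem norm_mkQ_ge_of_forall_apply_succ {f g : ℕ →ᵇ X} (hfg : ∀ n, g n = f (n + 1)) :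
    ‖(totallyBoundedSequences 𝕜 X).mkQ f‖ ≤ ‖(totallyBoundedSequences 𝕜 X).mkQ g‖ := by
  rw [← one_mul ‖(totallyBoundedSequences 𝕜 X).mkQ g‖]
  refine norm_mk_le_mul_norm_mk zero_le_one fun a ha => ?_
  let b : ℕ → X
    | 0 => f 0
    | n + 1 => a n
  have hb : ∀ n, ‖b n‖ ≤ max ‖f‖ ‖a‖
    | 0 => le_max_of_le_left (f.norm_coe_le_norm 0)
    | n + 1 => le_max_of_le_right (a.norm_coe_le_norm n)
  refine ⟨BoundedContinuousFunction.ofNormedAddCommGroupDiscrete b _ hb, ?_, ?_⟩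
  · refine (TotallyBounded.insert (f 0) ha).subset (range_subset_iff.2 ?_)
    rintro (_ | n)
    · exact mem_insert _ _
    · exact mem_insert_of_mem _ (mem_range_self n)
  · rw [one_mul, BoundedContinuousFunction.norm_le (norm_nonneg _)]
    rintro (_ | n)
    · exact (congrArg norm (sub_self (f 0))).trans_le (norm_zero.trans_le (norm_nonneg _))
    · exact (congrArg (‖· - a n‖) (hfg n).symm).trans_le ((g - a).norm_coe_le_norm n)

theorem norm_mkQ_eq_of_forall_apply_succ {f g : ℕ →ᵇ X} (hfg : ∀ n, g n = f (n + 1)) :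
    ‖(totallyBoundedSequences 𝕜 X).mkQ g‖ = ‖(totallyBoundedSequences 𝕜 X).mkQ f‖ :=
  (norm_mkQ_le_of_forall_apply_succ hfg).antisymm (norm_mkQ_ge_of_forall_apply_succ hfg)

theorem norm_mkQ_compLeft_le (S : X →L[𝕜] X) (f : ℕ →ᵇ X) :
    ‖(totallyBoundedSequences 𝕜 X).mkQ (S.compLeftContinuousBounded ℕ f)‖ ≤
      ‖S‖ * ‖(totallyBoundedSequences 𝕜 X).mkQ f‖ := by
  refine norm_mk_le_mul_norm_mk (norm_nonneg S) fun a ha =>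
    ⟨S.compLeftContinuousBounded ℕ a, ?_, ?_⟩
  · refine (TotallyBounded.image ha S.uniformContinuous).subset (range_subset_iff.2 fun n => ?_)
    exact mem_image_of_mem S (mem_range_self n)
  · rw [← map_sub, BoundedContinuousFunction.norm_le (by positivity)]
    exact fun n => S.le_opNorm_of_le ((f - a).norm_coe_le_norm n)

end totallyBoundedSequences

/-- The map sending `x` to its orbit `n ↦ (T ^ n) x` under a power-bounded operator, as a bounded
sequence. -/
noncomputable def orbitMap (T : X →L[𝕜] X) (hT : ∃ C, ∀ n, ‖T ^ n‖ ≤ C) : X →L[𝕜] ℕ →ᵇ X :=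
  LinearMap.mkContinuousOfExistsBound
    { toFun x := BoundedContinuousFunction.ofNormedAddCommGroupDiscrete (fun n => (T ^ n) x)
        (hT.choose * ‖x‖) fun n => (T ^ n).le_of_opNorm_le (hT.choose_spec n) x
      map_add' x y := by ext n; simp
      map_smul' c x := by ext n; simp }
    (hT.imp fun C hC x => (BoundedContinuousFunction.norm_le_of_nonempty).2 fun n =>
      (T ^ n).le_of_opNorm_le (hC n) x)

/-- The orbit map modulo totally bounded sequences; `‖orbitMapQuotient T hT x‖` measures how far
the orbit of `x` is from being totally bounded. -/
noncomputable def orbitMapQuotient (T : X →L[𝕜] X) (hT : ∃ C, ∀ n, ‖T ^ n‖ ≤ C) :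
    X →L[𝕜] (ℕ →ᵇ X) ⧸ totallyBoundedSequences 𝕜 X :=
  (totallyBoundedSequences 𝕜 X).mkQL ∘L orbitMap T hT

theorem orbitMapQuotient_eq_zero_iff (T : X →L[𝕜] X) (hT : ∃ C, ∀ n, ‖T ^ n‖ ≤ C) (x : X) :
    orbitMapQuotient T hT x = 0 ↔ TotallyBounded (range fun n => (T ^ n) x) :=
  Submodule.Quotient.mk_eq_zero _

theorem norm_orbitMapQuotient_map (T : X →L[𝕜] X) (hT : ∃ C, ∀ n, ‖T ^ n‖ ≤ C) (x : X) :
    ‖orbitMapQuotient T hT (T x)‖ = ‖orbitMapQuotient T hT x‖ :=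
  totallyBoundedSequences.norm_mkQ_eq_of_forall_apply_succ fun n =>
    congrArg (· x) (pow_succ T n).symm

theorem norm_orbitMapQuotient_map_le_of_commute {T S : X →L[𝕜] X}
    (hT : ∃ C, ∀ n, ‖T ^ n‖ ≤ C) (hST : Commute S T) (x : X) :
    ‖orbitMapQuotient T hT (S x)‖ ≤ ‖S‖ * ‖orbitMapQuotient T hT x‖ := by
  have horbit : orbitMap T hT (S x) = S.compLeftContinuousBounded ℕ (orbitMap T hT x) := by
    ext n
    exact congrArg (· x) (hST.pow_right n).eq.symm
  exact (congrArg (‖(totallyBoundedSequences 𝕜 X).mkQ ·‖) horbit).trans_le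
    (totallyBoundedSequences.norm_mkQ_compLeft_le S (orbitMap T hT x))

end

theorem exists_eigenfunctional_of_not_totallyBounded_orbit {X : Type*} [NormedAddCommGroup X]
    [NormedSpace ℂ X] [CompleteSpace X] {T : X →L[ℂ] X} (hT : ∃ C, ∀ n, ‖T ^ n‖ ≤ C)
    (hcount : (spectrum ℂ T ∩ {l | ‖l‖ = 1}).Countable)
    (hx : ∃ x, ¬ TotallyBounded (range fun n => (T ^ n) x)) :
    ∃ l : ℂ, ‖l‖ = 1 ∧ ∃ φ : X →L[ℂ] ℂ, φ ≠ 0 ∧ (∀ x, φ (T x) = l * φ x) ∧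
      ∀ x, TotallyBounded (range fun n => (T ^ n) x) → φ x = 0 := by
  have hne : orbitMapQuotient T hT ≠ 0 := by
    obtain ⟨x, hx⟩ := hx
    intro h
    exact hx ((orbitMapQuotient_eq_zero_iff T hT x).1 (by rw [h, zero_apply]))
  obtain ⟨l, hl, φ, hφ, hφT, hφJ⟩ := exists_eigenfunctional hne (norm_orbitMapQuotient_map T hT)
    (fun S hS => ⟨‖S‖, norm_orbitMapQuotient_map_le_of_commute hT hS⟩) hcount
  exact ⟨l, hl, φ, hφ, hφT, fun x hx => hφJ x ((orbitMapQuotient_eq_zero_iff T hT x).2 hx)⟩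

/-! ### Minimal sets -/

section
variable {Y : Type*} [TopologicalSpace Y] {f : Y → Y} {M : Set Y}

/-- `M` is a minimal set of the dynamical system `f`: a nonempty closed set mapped into itself by
`f` that contains no smaller such set. -/
def IsMinimalSet (f : Y → Y) (M : Set Y) : Prop :=
  Minimal (fun N => IsClosed N ∧ N.Nonempty ∧ MapsTo f N N) M

theorem exists_isMinimalSet_subset_of_isCompact {K : Set Y} (hK : IsCompact K) (hKc : IsClosed K)
    (hne : K.Nonempty) (hfK : MapsTo f K K) : ∃ M ⊆ K, IsMinimalSet f M := by
  let F : Set (Set Y) := {N | N ⊆ K ∧ IsClosed N ∧ N.Nonempty ∧ MapsTo f N N}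
  have hchain : ∀ c ⊆ F, IsChain (· ⊆ ·) c → c.Nonempty → ∃ lb ∈ F, ∀ N ∈ c, lb ⊆ N := by
    intro c hcF hc hcne
    have := hcne.to_subtype
    have hsub : ⋂₀ c ⊆ K := (sInter_subset_of_mem hcne.some_mem).trans (hcF hcne.some_mem).1
    refine ⟨⋂₀ c, ⟨hsub, isClosed_sInter fun N hN => (hcF hN).2.1, ?_,
      fun y hy N hN => (hcF hN).2.2.2 (hy N hN)⟩, fun N hN => sInter_subset_of_mem hN⟩
    exact IsCompact.nonempty_sInter_of_directed_nonempty_isCompact_isClosed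
      (fun A hA B hB => (hc.total hA hB).elim (fun h => ⟨A, hA, subset_rfl, h⟩)
        fun h => ⟨B, hB, h, subset_rfl⟩) (fun N hN => (hcF hN).2.2.1)
      (fun N hN => hK.of_isClosed_subset (hcF hN).2.1 (hcF hN).1) fun N hN => (hcF hN).2.1
  obtain ⟨M, hMK, hM⟩ := zorn_superset_nonempty F hchain K ⟨subset_rfl, hKc, hne, hfK⟩
  exact ⟨M, hMK, hM.prop.2, fun N hN hNM => hM.le_of_le ⟨hNM.trans hMK, hN⟩ hNM⟩

namespace IsMinimalSet

theorem isClosed (hM : IsMinimalSet f M) : IsClosed M := hM.prop.1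

theorem nonempty (hM : IsMinimalSet f M) : M.Nonempty := hM.prop.2.1

theorem mapsTo (hM : IsMinimalSet f M) : MapsTo f M M := hM.prop.2.2

theorem image_iterate_eq [T2Space Y] (hM : IsMinimalSet f M) (hMc : IsCompact M)
    (hf : Continuous f) (n : ℕ) : f^[n] '' M = M := by
  have himage : f '' M = M := Minimal.eq_of_subset hM
    ⟨(hMc.image hf).isClosed, hM.nonempty.image f,
      (mapsTo_image f M).mono_left hM.mapsTo.image_subset⟩
    hM.mapsTo.image_subset
  induction n with
  | zero => exact image_id M
  | succ n ih => rw [Function.iterate_succ, image_comp, himage, ih]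

theorem subset_iUnion_preimage_iterate (hM : IsMinimalSet f M) (hf : Continuous f) {O : Set Y}
    (hO : IsOpen O) (hMO : (M ∩ O).Nonempty) : M ⊆ ⋃ n, f^[n] ⁻¹' O := by
  by_contra hsub
  have hinv : MapsTo f (M \ ⋃ n, f^[n] ⁻¹' O) (M \ ⋃ n, f^[n] ⁻¹' O) := by
    refine fun y hy => ⟨hM.mapsTo hy.1, fun hfy => hy.2 ?_⟩
    obtain ⟨n, hn⟩ := mem_iUnion.1 hfy
    exact mem_iUnion.2 ⟨n + 1, hn⟩
  have hclosed : IsClosed (M \ ⋃ n, f^[n] ⁻¹' O) :=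
    hM.isClosed.sdiff (isOpen_iUnion fun n => hO.preimage (hf.iterate n))
  obtain ⟨y, hyM, hyO⟩ := hMO
  have hy := hM.le_of_le ⟨hclosed, sdiff_nonempty.2 hsub, hinv⟩ sdiff_subset hyM
  exact hy.2 (mem_iUnion.2 ⟨0, hyO⟩)

theorem exists_subset_iUnion_image_iterate [T2Space Y] (hM : IsMinimalSet f M)
    (hMc : IsCompact M) (hf : Continuous f) {O : Set Y} (hO : IsOpen O)
    (hMO : (M ∩ O).Nonempty) : ∃ N, M ⊆ ⋃ k ∈ Iic N, f^[k] '' (M ∩ O) := by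
  obtain ⟨t, ht⟩ := hMc.elim_finite_subcover _ (fun n => hO.preimage (hf.iterate n))
    (hM.subset_iUnion_preimage_iterate hf hO hMO)
  refine ⟨t.sup id, fun y hy => ?_⟩
  obtain ⟨w, hw, rfl⟩ := (hM.image_iterate_eq hMc hf (t.sup id)).superset hy
  obtain ⟨n, hnt, hnO⟩ := mem_iUnion₂.1 (ht hw)
  refine mem_iUnion₂.2 ⟨t.sup id - n, Nat.sub_le _ _, f^[n] w, ⟨hM.mapsTo.iterate n hw, hnO⟩, ?_⟩
  have hn : n ≤ t.sup id := Finset.le_sup (f := id) hnt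
  rw [← Function.iterate_add_apply, Nat.sub_add_cancel hn]

end IsMinimalSet
end

/-! ### Weak closures of orbits -/

section
variable {𝕜 X : Type*} [RCLike 𝕜] [NormedAddCommGroup X] [NormedSpace 𝕜 X]

theorem isClosed_toWeakSpace_image_of_convex [NormedSpace ℝ X] [IsScalarTower ℝ 𝕜 X] {s : Set X}
    (hs : Convex ℝ s) (hsc : IsClosed s) :
    IsClosed (toWeakSpace 𝕜 X '' s) := by
  rw [← hsc.closure_eq, hs.toWeakSpace_closure 𝕜]
  exact isClosed_closure

theorem isSeparable_preimage_closure_toWeakSpace_image {s : Set X}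
    (hs : TopologicalSpace.IsSeparable s) :
    TopologicalSpace.IsSeparable (toWeakSpace 𝕜 X ⁻¹' closure (toWeakSpace 𝕜 X '' s)) := by
  let := NormedSpace.restrictScalars ℝ 𝕜 X
  have hclosed : IsClosed (toWeakSpace 𝕜 X '' (Submodule.span 𝕜 s).topologicalClosure) :=
    isClosed_toWeakSpace_image_of_convex
      ((Submodule.span 𝕜 s).topologicalClosure.restrictScalars ℝ).convex
      (Submodule.isClosed_topologicalClosure _)
  refine ((hs.span (R := 𝕜)).closure).mono ?_
  have hsub := closure_minimal (image_mono (f := toWeakSpace 𝕜 X)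
    (Submodule.subset_span.trans (Submodule.le_topologicalClosure (Submodule.span 𝕜 s)))) hclosed
  exact (preimage_mono hsub).trans
    (preimage_image_eq _ (toWeakSpace 𝕜 X).injective).subset

theorem exists_isOpen_inter_subset_toWeakSpace_image_closedBall {M : Set (WeakSpace 𝕜 X)}
    (hM : IsCompact M) (hne : M.Nonempty)
    (hsep : TopologicalSpace.IsSeparable (toWeakSpace 𝕜 X ⁻¹' M)) {δ : ℝ} (hδ : 0 < δ) :
    ∃ O, IsOpen O ∧ (M ∩ O).Nonempty ∧ ∃ d, M ∩ O ⊆ toWeakSpace 𝕜 X '' closedBall d δ := by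
  let := NormedSpace.restrictScalars ℝ 𝕜 X
  obtain ⟨D, hD, hMD⟩ := hsep
  have := isCompact_iff_compactSpace.1 hM
  have := hne.to_subtype
  have := hD.to_subtype
  let B (d : D) : Set M := (↑) ⁻¹' (toWeakSpace 𝕜 X '' closedBall (d : X) δ)
  have hB (d : D) : IsClosed (B d) := (isClosed_toWeakSpace_image_of_convex
    (convex_closedBall (d : X) δ) isClosed_closedBall).preimage continuous_subtype_val
  have hcover : ⋃ d, B d = univ := by
    refine eq_univ_of_forall fun ⟨y, hy⟩ => mem_iUnion.2 ?_
    obtain ⟨x, rfl⟩ := (toWeakSpace 𝕜 X).surjective y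
    obtain ⟨d, hd, hxd⟩ := Metric.mem_closure_iff.1 (hMD hy) δ hδ
    exact ⟨⟨d, hd⟩, x, hxd.le, rfl⟩
  obtain ⟨d, u, hu⟩ := nonempty_interior_of_iUnion_of_closed hB hcover
  obtain ⟨O, hO, hOd⟩ := isOpen_induced_iff.1 (isOpen_interior (s := B d))
  refine ⟨O, hO, ⟨u, u.2, hOd.superset hu⟩, d, fun y hy => ?_⟩
  have hyB : (⟨y, hy.1⟩ : M) ∈ B d := interior_subset (hOd.subset hy.2)
  exact hyB

theorem iterate_weakSpaceMap (T : X →L[𝕜] X) (n : ℕ) (x : X) :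
    (WeakSpace.map T)^[n] (toWeakSpace 𝕜 X x) = toWeakSpace 𝕜 X ((T ^ n) x) := by
  induction n generalizing x with
  | zero => rfl
  | succ _ ih => exact ih (T x)

theorem IsMinimalSet.totallyBounded_preimage {T : X →L[𝕜] X} (hT : ∃ C, ∀ n, ‖T ^ n‖ ≤ C)
    {M : Set (WeakSpace 𝕜 X)} (hM : IsMinimalSet (WeakSpace.map T) M) (hMc : IsCompact M)
    (hsep : TopologicalSpace.IsSeparable (toWeakSpace 𝕜 X ⁻¹' M)) :
    TotallyBounded (toWeakSpace 𝕜 X ⁻¹' M) := by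
  obtain ⟨C, hC⟩ := hT
  refine Metric.totallyBounded_iff.2 fun ε hε => ?_
  have hC0 : 0 ≤ C := (norm_nonneg _).trans (hC 0)
  obtain ⟨δ, hδ, hCδ⟩ : ∃ δ > 0, C * δ < ε := exists_pos_mul_lt hε C
  obtain ⟨O, hO, hMO, d, hd⟩ :=
    exists_isOpen_inter_subset_toWeakSpace_image_closedBall hMc hM.nonempty hsep hδ
  obtain ⟨N, hN⟩ :=
    hM.exists_subset_iUnion_image_iterate hMc (WeakSpace.map T).continuous hO hMO
  refine ⟨(fun k => (T ^ k) d) '' Iic N, (finite_Iic N).image _, fun x hx => ?_⟩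
  obtain ⟨k, hk, z, hz, hzx⟩ := mem_iUnion₂.1 (hN hx)
  obtain ⟨y, hy, rfl⟩ := hd hz
  obtain rfl : (T ^ k) y = x :=
    (toWeakSpace 𝕜 X).injective ((iterate_weakSpaceMap T k y).symm.trans hzx)
  refine mem_iUnion₂.2 ⟨(T ^ k) d, mem_image_of_mem _ hk, ?_⟩
  calc dist ((T ^ k) y) ((T ^ k) d) ≤ ‖T ^ k‖ * dist y d := (T ^ k).dist_le_opNorm y d
    _ ≤ C * δ := mul_le_mul (hC k) hy dist_nonneg hC0
    _ < ε := hCδ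

theorem exists_mem_closure_orbit_totallyBounded_orbit {T : X →L[𝕜] X}
    (hT : ∃ C, ∀ n, ‖T ^ n‖ ≤ C) {x : X}
    (hx : IsCompact (closure (toWeakSpace 𝕜 X '' range fun n : ℕ => (T ^ n) x))) :
    ∃ m, toWeakSpace 𝕜 X m ∈ closure (toWeakSpace 𝕜 X '' range fun n : ℕ => (T ^ n) x) ∧
      TotallyBounded (range fun n : ℕ => (T ^ n) m) := by
  have hinv : MapsTo (WeakSpace.map T) (toWeakSpace 𝕜 X '' range fun n : ℕ => (T ^ n) x)
      (toWeakSpace 𝕜 X '' range fun n : ℕ => (T ^ n) x) := by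
    rintro _ ⟨_, ⟨n, rfl⟩, rfl⟩
    exact mem_image_of_mem _ ⟨n + 1, congrArg (· x) (pow_succ' T n)⟩
  obtain ⟨M, hMK, hM⟩ := exists_isMinimalSet_subset_of_isCompact hx isClosed_closure
    ((range_nonempty _).image _).closure (hinv.closure (WeakSpace.map T).continuous)
  have htb : TotallyBounded (toWeakSpace 𝕜 X ⁻¹' M) :=
    hM.totallyBounded_preimage hT (hx.of_isClosed_subset hM.isClosed hMK)
      ((isSeparable_preimage_closure_toWeakSpace_image (countable_range _).isSeparable).mono
        (preimage_mono hMK))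
  obtain ⟨m, hm⟩ := hM.nonempty
  obtain ⟨m, rfl⟩ := (toWeakSpace 𝕜 X).surjective m
  refine ⟨m, hMK hm, htb.subset (range_subset_iff.2 fun n => ?_)⟩
  exact (iterate_weakSpaceMap T n m).subst (motive := (· ∈ M)) (hM.mapsTo.iterate n hm)

theorem continuous_comp_toWeakSpace_symm (φ : X →L[𝕜] 𝕜) :
    Continuous fun y : WeakSpace 𝕜 X => φ ((toWeakSpace 𝕜 X).symm y) :=
  WeakBilin.eval_continuous (topDualPairing 𝕜 X).flip φ

theorem exists_forall_norm_le_of_isCompact_closure_toWeakSpace_image {ι : Type*} {u : ι → X}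
    (hu : IsCompact (closure (toWeakSpace 𝕜 X '' range u))) : ∃ C, ∀ i, ‖u i‖ ≤ C := by
  obtain ⟨C, hC⟩ := banach_steinhaus (g := fun i => NormedSpace.inclusionInDoubleDual 𝕜 X (u i))
    fun φ => by
      obtain ⟨C, hC⟩ :=
        (hu.image (continuous_comp_toWeakSpace_symm φ)).isBounded.exists_norm_le
      exact ⟨C, fun i => hC _ (mem_image_of_mem _
        (subset_closure (mem_image_of_mem _ (mem_range_self i))))⟩
  exact ⟨C, fun i =>
    ((NormedSpace.inclusionInDoubleDualLi (E := X) 𝕜).norm_map (u i)).symm.trans_le (hC i)⟩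

theorem exists_forall_norm_pow_le_of_isCompact_closure_orbit [CompleteSpace X] {T : X →L[𝕜] X}
    (hT : ∀ x, IsCompact (closure (toWeakSpace 𝕜 X '' range fun n : ℕ => (T ^ n) x))) :
    ∃ C, ∀ n, ‖T ^ n‖ ≤ C :=
  banach_steinhaus fun x => exists_forall_norm_le_of_isCompact_closure_toWeakSpace_image (hT x)

theorem norm_apply_eq_of_mem_closure_orbit {T : X →L[𝕜] X} {φ : X →L[𝕜] 𝕜} {l : 𝕜}
    (hl : ‖l‖ = 1) (hφ : ∀ x, φ (T x) = l * φ x) {x m : X}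
    (hm : toWeakSpace 𝕜 X m ∈ closure (toWeakSpace 𝕜 X '' range fun n : ℕ => (T ^ n) x)) :
    ‖φ m‖ = ‖φ x‖ := by
  have horbit (n : ℕ) : ‖φ ((T ^ n) x)‖ = ‖φ x‖ := by
    induction n with
    | zero => rfl
    | succ n ih =>
      rw [pow_succ', mul_apply_eq_comp, hφ, norm_mul, hl, one_mul, ih]
  have hclosed : IsClosed {y | ‖φ ((toWeakSpace 𝕜 X).symm y)‖ = ‖φ x‖} :=
    isClosed_eq (continuous_comp_toWeakSpace_symm φ).norm continuous_const
  refine closure_minimal ?_ hclosed hm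
  rintro _ ⟨_, ⟨n, rfl⟩, rfl⟩
  exact horbit n
end

/-- A weakly almost periodic operator on a complex Banach space whose
spectrum meets the unit circle in a countable set is almost periodic: every orbit
`{Tⁿ x : n ≥ 0}` is relatively compact in the norm topology. -/
theorem almostPeriodic_of_weaklyAlmostPeriodic_countable_unimodular_spectrum
    {X : Type*} [NormedAddCommGroup X] [NormedSpace ℂ X] [CompleteSpace X]
    (T : X →L[ℂ] X)
    (hwap : ∀ x : X, IsCompact (closure
      (toWeakSpace ℂ X '' Set.range (fun n : ℕ => (T ^ n) x))))
    (hσ : (spectrum ℂ T ∩ {lam : ℂ | ‖lam‖ = 1}).Countable) :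
    ∀ x : X, IsCompact (closure (Set.range (fun n : ℕ => (T ^ n) x))) := by
  suffices htb : ∀ x, TotallyBounded (range fun n : ℕ => (T ^ n) x) from
    fun x => (htb x).closure.isCompact_of_isClosed isClosed_closure
  by_contra! hnot
  have hpow : ∃ C, ∀ n, ‖T ^ n‖ ≤ C := exists_forall_norm_pow_le_of_isCompact_closure_orbit hwap
  obtain ⟨l, hl, φ, hφ, hφT, hφtb⟩ :=
    exists_eigenfunctional_of_not_totallyBounded_orbit hpow hσ hnot
  refine hφ (ContinuousLinearMap.ext fun x => ?_)
  obtain ⟨m, hmx, hm⟩ := exists_mem_closure_orbit_totallyBounded_orbit hpow (hwap x)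
  rw [zero_apply, ← norm_eq_zero,
    ← norm_apply_eq_of_mem_closure_orbit hl hφT hmx, hφtb m hm, norm_zero]
end
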